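/- Let n(t) := (cos t, sin t, 0) and fix κ² > 0. For C¹ 2π-periodic u : ℝ → ℝ³ define F(u) := ∫_{−π}^{π} |u'(t)|² dt + κ² ∫_{−π}^{π} |u(t) × n(t)|² dt. Consider the class of C¹ 2π-periodic u with |u(t)| = 1 for all t and ∫_{−π}^{π} (u₁(t), u₂(t)) dt = (0,0). Then in this class: (i) if 0 < κ² < 1, the only minimizers of F are the constants u ≡ (0,0,1) and u ≡ (0,0,−1), with minimal value 2πκ²; (ii) if κ² > 1, the only minimizers are u = n and u = −n, with minimal value 2π; (iii) if κ² = 1, the minimizers are exactly the maps u_θ(t) = (sin θ cos t, sin θ sin t, cos θ) for θ ∈ [−π, π], with common value 2π. -/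

import Mathlib

open Real Set MeasureTheory

/-- Squared Euclidean norm of a vector in `ℝ³`. -/
noncomputable def sq3 (v : Fin 3 → ℝ) : ℝ := v 0 ^ 2 + v 1 ^ 2 + v 2 ^ 2

/-- The outward unit normal `n(t) = (cos t, sin t, 0)` to the unit circle. -/
noncomputable def nvec (t : ℝ) : Fin 3 → ℝ := ![Real.cos t, Real.sin t, 0]

/-- The reduced energy `F(u) = ∫ |u'|² + κ² ∫ |u × n|²` on the unit circle. -/
noncomputable def circE (κ : ℝ) (u : ℝ → Fin 3 → ℝ) : ℝ :=
  (∫ t in (-π)..π, sq3 (deriv u t))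
    + κ ^ 2 * ∫ t in (-π)..π, sq3 (crossProduct (u t) (nvec t))

/-- The admissible class: `C¹` `2π`-periodic unit-norm maps whose in-plane
component has zero average (weak axial symmetry). -/
def AdmWAS (u : ℝ → Fin 3 → ℝ) : Prop :=
  ContDiff ℝ 1 u ∧
  (∀ t : ℝ, u (t + 2 * π) = u t) ∧
  (∀ t : ℝ, sq3 (u t) = 1) ∧
  (∫ t in (-π)..π, u t 0) = 0 ∧ (∫ t in (-π)..π, u t 1) = 0

/-- `u` minimizes `F` in the weakly axially symmetric class. -/
def IsMinimizerWAS (κ : ℝ) (u : ℝ → Fin 3 → ℝ) : Prop :=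
  AdmWAS u ∧ ∀ v : ℝ → Fin 3 → ℝ, AdmWAS v → circE κ u ≤ circE κ v

/-- The axially symmetric configuration `u_θ(t) = (sin θ cos t, sin θ sin t, cos θ)`. -/
noncomputable def uax (θ t : ℝ) : Fin 3 → ℝ :=
  ![Real.sin θ * Real.cos t, Real.sin θ * Real.sin t, Real.cos θ]

/-!
A unit vector satisfies `min 1 κ² ≤ |u_⊥|² + κ² u₃²`, and since `u_⊥` has zero average, Wirtinger's
inequality gives `∫ |u_⊥|² ≤ ∫ |u_⊥'|²`. With `τ` the unit tangent, `F(u)` is therefore at least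
`2π min 1 κ² + ∫ (u₃'² + κ² (u · τ)²)`. If `F(u) = 2π min 1 κ²`, then `u₃` is constant and `u_⊥` is
a multiple of `n` whose factor has constant square; by continuity the factor is constant and
`u = u_θ`. The energy `F(u_θ) = 2π (sin² θ + κ² cos² θ)` then selects `θ`.
-/

theorem memLp_restrict_of_continuousOn_of_subset {X E : Type*} [TopologicalSpace X]
    [MeasurableSpace X] [OpensMeasurableSpace X] [NormedAddCommGroup E] {μ : Measure X}
    [IsFiniteMeasureOnCompacts μ] {f : X → E} {K s : Set X} (hf : ContinuousOn f K)
    (hK : IsCompact K) (hs : MeasurableSet s) (hsK : s ⊆ K) (p : ENNReal) :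
    MemLp f p (μ.restrict s) := by
  have : IsFiniteMeasure (μ.restrict s) :=
    isFiniteMeasure_restrict.2 ((measure_mono hsK).trans_lt hK.measure_lt_top).ne
  obtain ⟨C, hC⟩ := hK.exists_bound_of_continuousOn hf
  exact MemLp.of_bound (hf.aestronglyMeasurable_of_subset_isCompact hK hs hsK) C
    (ae_restrict_of_forall_mem hs fun x hx ↦ hC x (hsK hx))

section Wirtinger

variable {a b : ℝ} {f f' : ℝ → ℂ}

theorem norm_fourierCoeffOn_eq_of_hasDerivAt (hab : a < b) {n : ℤ} (hn : n ≠ 0)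
    (hf : ContinuousOn f (Icc a b)) (hff' : ∀ x ∈ Ioo a b, HasDerivAt f (f' x) x)
    (hf' : IntervalIntegrable f' volume a b) (hfab : f a = f b) :
    ‖fourierCoeffOn hab f n‖ = (b - a) / (2 * π * |(n : ℝ)|) * ‖fourierCoeffOn hab f' n‖ := by
  have hcoeff := fourierCoeffOn_of_hasDerivAt_Ioo hab hn (by rwa [uIcc_of_le hab.le])
    (by rwa [min_eq_left hab.le, max_eq_right hab.le]) hf'
  rw [hfab, sub_self, mul_zero, zero_sub, ← Complex.ofReal_sub] at hcoeff
  rw [hcoeff]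
  simp only [norm_mul, norm_div, norm_neg, norm_one, Complex.norm_I, Complex.norm_real,
    Complex.norm_intCast, Complex.norm_ofNat, Real.norm_eq_abs, abs_of_pos pi_pos,
    abs_of_pos (sub_pos.2 hab)]
  ring

theorem norm_fourierCoeffOn_le_of_hasDerivAt (hab : a < b) (hf : ContinuousOn f (Icc a b))
    (hff' : ∀ x ∈ Ioo a b, HasDerivAt f (f' x) x) (hf' : IntervalIntegrable f' volume a b)
    (hfab : f a = f b) (hf0 : ∫ x in a..b, f x = 0) (n : ℤ) :
    ‖fourierCoeffOn hab f n‖ ≤ (b - a) / (2 * π) * ‖fourierCoeffOn hab f' n‖ := by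
  have hba : 0 < b - a := sub_pos.2 hab
  rcases eq_or_ne n 0 with rfl | hn
  · have hzero : fourierCoeffOn hab f 0 = 0 := by
      simp [fourierCoeffOn_eq_integral, hf0]
    rw [hzero, norm_zero]
    exact mul_nonneg (div_nonneg hba.le two_pi_pos.le) (norm_nonneg _)
  · have hn_abs : 1 ≤ |(n : ℝ)| := mod_cast Int.one_le_abs hn
    rw [norm_fourierCoeffOn_eq_of_hasDerivAt hab hn hf hff' hf' hfab]
    gcongr (b - a) / ?_ * _
    exact le_mul_of_one_le_right two_pi_pos.le hn_abs

theorem wirtinger_inequality (hab : a < b) (hf : ContinuousOn f (Icc a b))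
    (hff' : ∀ x ∈ Ioo a b, HasDerivAt f (f' x) x) (hf' : MemLp f' 2 (volume.restrict (Ioc a b)))
    (hfab : f a = f b) (hf0 : ∫ x in a..b, f x = 0) :
    ∫ x in a..b, ‖f x‖ ^ 2 ≤ ((b - a) / (2 * π)) ^ 2 * ∫ x in a..b, ‖f' x‖ ^ 2 := by
  have hf'_int : IntervalIntegrable f' volume a b :=
    (intervalIntegrable_iff_integrableOn_Ioc_of_le hab.le).2 (hf'.integrable one_le_two)
  have hf_memLp : MemLp f 2 (volume.restrict (Ioc a b)) :=
    memLp_restrict_of_continuousOn_of_subset hf isCompact_Icc measurableSet_Ioc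
      Ioc_subset_Icc_self 2
  have parseval := hasSum_sq_fourierCoeffOn hab hf_memLp
  have parseval' := (hasSum_sq_fourierCoeffOn hab hf').mul_left (((b - a) / (2 * π)) ^ 2)
  have hle := hasSum_le (fun n ↦ ?_) parseval parseval'
  · rw [smul_eq_mul, smul_eq_mul, mul_left_comm] at hle
    exact le_of_mul_le_mul_left hle (inv_pos.2 (sub_pos.2 hab))
  · rw [← mul_pow]
    gcongr
    exact norm_fourierCoeffOn_le_of_hasDerivAt hab hf hff' hf'_int hfab hf0 n

end Wirtinger

theorem periodic_deriv {𝕜 F : Type*} [NontriviallyNormedField 𝕜] [NormedAddCommGroup F]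
    [NormedSpace 𝕜 F] {f : 𝕜 → F} {c : 𝕜} (hf : Function.Periodic f c) :
    Function.Periodic (deriv f) c := fun x ↦ by
  rw [← deriv_comp_add_const, hf.funext]

theorem eq_zero_of_periodic_of_intervalIntegral_eq_zero {g : ℝ → ℝ} {T : ℝ} (hT : 0 < T)
    (hg : Continuous g) (hper : Function.Periodic g T) (hnonneg : ∀ t, 0 ≤ g t) {a : ℝ}
    (hint : ∫ t in a..a + T, g t = 0) (t : ℝ) : g t = 0 := by
  by_contra hne
  have hpos : 0 < ∫ s in t..t + T, g s :=
    intervalIntegral.integral_pos (by linarith) hg.continuousOn (fun s _ ↦ hnonneg s)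
      ⟨t, ⟨le_rfl, by linarith⟩, (hnonneg t).lt_of_ne' hne⟩
  rw [hper.intervalIntegral_add_eq t a, hint] at hpos
  exact hpos.false

theorem eq_of_forall_sq_eq {X 𝕜 : Type*} [TopologicalSpace X] [PreconnectedSpace X] [Field 𝕜]
    [TopologicalSpace 𝕜] [T1Space 𝕜] [ContinuousInv₀ 𝕜] [ContinuousMul 𝕜] {g : X → 𝕜} {c : 𝕜}
    (hg : Continuous g) (hsq : ∀ x, g x ^ 2 = c) (x y : X) : g x = g y := by
  have hxy : g x ^ 2 = g y ^ 2 := (hsq x).trans (hsq y).symm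
  rcases eq_or_ne (g y) 0 with hy | hy
  · rw [hy] at hxy ⊢
    simpa using hxy
  · exact isPreconnected_univ.eq_of_sq_eq hg.continuousOn (continuousOn_const (c := g y))
      (fun z _ ↦ (hsq z).trans (hsq y).symm) (fun _ ↦ hy) (mem_univ y) rfl (mem_univ x)

theorem exists_cos_eq_sin_eq {x y : ℝ} (h : x ^ 2 + y ^ 2 = 1) :
    ∃ θ ∈ Icc (-π) π, cos θ = x ∧ sin θ = y := by
  have hnorm : ‖(⟨x, y⟩ : ℂ)‖ = 1 := by
    rw [Complex.norm_def, Complex.normSq_mk, Real.sqrt_eq_one, ← h]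
    ring
  have hne : (⟨x, y⟩ : ℂ) ≠ 0 := norm_ne_zero_iff.1 (hnorm ▸ one_ne_zero)
  exact ⟨Complex.arg ⟨x, y⟩, ⟨(Complex.neg_pi_lt_arg _).le, Complex.arg_le_pi _⟩,
    by simp [Complex.cos_arg hne, hnorm], by simp [Complex.sin_arg, hnorm]⟩

/-- The in-plane component `(v₁, v₂)` of `v ∈ ℝ³`, encoded as the complex number `v₁ + i v₂` so that
Fourier series apply to it directly. -/
noncomputable def inPlane (v : Fin 3 → ℝ) : ℂ := v 0 + v 1 * Complex.I

/-- The component of `v ∈ ℝ³` along the unit normal `nvec t`. -/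
noncomputable def radial (v : Fin 3 → ℝ) (t : ℝ) : ℝ := v 0 * cos t + v 1 * sin t

/-- The component of `v ∈ ℝ³` along the unit tangent `(-sin t, cos t, 0)` to the unit circle. -/
noncomputable def tangential (v : Fin 3 → ℝ) (t : ℝ) : ℝ := v 1 * cos t - v 0 * sin t

/-- The part of the energy density of `circE κ u` that the bound `2π min 1 κ²` discards, and which
must therefore vanish for a minimizer. -/
noncomputable def excessDensity (κ : ℝ) (u : ℝ → Fin 3 → ℝ) (t : ℝ) : ℝ :=
  deriv u t 2 ^ 2 + κ ^ 2 * tangential (u t) t ^ 2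

section Pointwise

variable (v : Fin 3 → ℝ) (t : ℝ)

theorem norm_inPlane_sq : ‖inPlane v‖ ^ 2 = v 0 ^ 2 + v 1 ^ 2 := by
  rw [inPlane, Complex.norm_add_mul_I, sq_sqrt (by positivity)]

theorem sq3_eq_norm_inPlane_sq_add : sq3 v = ‖inPlane v‖ ^ 2 + v 2 ^ 2 := by
  rw [norm_inPlane_sq, sq3]

theorem sq3_crossProduct_nvec :
    sq3 (crossProduct v (nvec t)) = v 2 ^ 2 + tangential v t ^ 2 := by
  simp only [sq3, nvec, tangential, cross_apply, Matrix.cons_val]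
  linear_combination v 2 ^ 2 * sin_sq_add_cos_sq t

theorem norm_inPlane_sq_eq_radial_sq_add_tangential_sq :
    ‖inPlane v‖ ^ 2 = radial v t ^ 2 + tangential v t ^ 2 := by
  rw [norm_inPlane_sq, radial, tangential]
  linear_combination -(v 0 ^ 2 + v 1 ^ 2) * sin_sq_add_cos_sq t

variable {v t}

theorem eq_radial_of_tangential_eq_zero (h : tangential v t = 0) :
    v = ![radial v t * cos t, radial v t * sin t, v 2] := by
  rw [tangential] at h
  funext i
  fin_cases i
  · simp only [radial, Fin.zero_eta, Matrix.cons_val]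
    linear_combination -v 0 * sin_sq_add_cos_sq t - sin t * h
  · simp only [radial, Fin.mk_one, Matrix.cons_val]
    linear_combination -v 1 * sin_sq_add_cos_sq t + cos t * h
  · rfl

theorem min_le_norm_inPlane_sq_add_of_sq3_eq_one (hv : sq3 v = 1) (c : ℝ) :
    min 1 c ≤ ‖inPlane v‖ ^ 2 + c * v 2 ^ 2 := by
  rw [sq3_eq_norm_inPlane_sq_add] at hv
  calc min 1 c = min 1 c * ‖inPlane v‖ ^ 2 + min 1 c * v 2 ^ 2 := by rw [← mul_add, hv, mul_one]
    _ ≤ 1 * ‖inPlane v‖ ^ 2 + c * v 2 ^ 2 := by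
      gcongr
      exacts [min_le_left _ _, min_le_right _ _]
    _ = ‖inPlane v‖ ^ 2 + c * v 2 ^ 2 := by rw [one_mul]

end Pointwise

section AxiallySymmetric

theorem hasDerivAt_uax (θ t : ℝ) : HasDerivAt (uax θ) ![-(sin θ * sin t), sin θ * cos t, 0] t := by
  rw [hasDerivAt_pi]
  intro i
  fin_cases i
  · simpa [uax] using (hasDerivAt_cos t).const_mul (sin θ)
  · simpa [uax] using (hasDerivAt_sin t).const_mul (sin θ)
  · simpa [uax] using hasDerivAt_const t (cos θ)

theorem contDiff_uax (θ : ℝ) {n : WithTop ℕ∞} : ContDiff ℝ n (uax θ) := by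
  rw [contDiff_pi]
  intro i
  fin_cases i
  · exact contDiff_const.mul contDiff_cos
  · exact contDiff_const.mul contDiff_sin
  · exact contDiff_const

theorem sq3_uax (θ t : ℝ) : sq3 (uax θ t) = 1 := by
  simp only [sq3, uax, Matrix.cons_val]
  linear_combination sin θ ^ 2 * sin_sq_add_cos_sq t + sin_sq_add_cos_sq θ

theorem admWAS_uax (θ : ℝ) : AdmWAS (uax θ) :=
  ⟨contDiff_uax θ, fun t ↦ by simp [uax], sq3_uax θ, by simp [uax], by simp [uax]⟩

theorem circE_uax (κ θ : ℝ) :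
    circE κ (uax θ) = 2 * π * (sin θ ^ 2 + κ ^ 2 * cos θ ^ 2) := by
  have hderiv (t : ℝ) : sq3 (deriv (uax θ) t) = sin θ ^ 2 := by
    simp only [(hasDerivAt_uax θ t).deriv, sq3, Matrix.cons_val]
    linear_combination sin θ ^ 2 * sin_sq_add_cos_sq t
  have hcross (t : ℝ) : sq3 (crossProduct (uax θ t) (nvec t)) = cos θ ^ 2 := by
    simp only [sq3_crossProduct_nvec, tangential, uax, Matrix.cons_val]
    ring
  simp only [circE, hderiv, hcross, intervalIntegral.integral_const, smul_eq_mul]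
  ring

theorem uax_zero : uax 0 = fun _ ↦ ![0, 0, 1] := by
  simp [funext_iff, uax]

theorem uax_pi : uax π = fun _ ↦ ![0, 0, -1] := by
  simp [funext_iff, uax]

theorem uax_pi_div_two : uax (π / 2) = nvec := by
  simp [funext_iff, uax, nvec]

theorem uax_neg_pi_div_two : uax (-(π / 2)) = fun t ↦ -nvec t := by
  simp [funext_iff, uax, nvec]

end AxiallySymmetric

section LowerBound

variable {κ : ℝ} {u : ℝ → Fin 3 → ℝ}

theorem continuous_inPlane_comp (hu : Continuous u) : Continuous fun t ↦ inPlane (u t) := by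
  unfold inPlane
  fun_prop

theorem hasDerivAt_inPlane_comp {u' : Fin 3 → ℝ} {t : ℝ} (hu : HasDerivAt u u' t) :
    HasDerivAt (fun s ↦ inPlane (u s)) (inPlane u') t :=
  (hasDerivAt_pi.1 hu 0).ofReal_comp.add ((hasDerivAt_pi.1 hu 1).ofReal_comp.mul_const Complex.I)

theorem continuous_excessDensity (hu : ContDiff ℝ 1 u) : Continuous (excessDensity κ u) := by
  have hu_cont : Continuous u := hu.continuous
  unfold excessDensity tangential
  fun_prop

theorem excessDensity_nonneg (t : ℝ) : 0 ≤ excessDensity κ u t := by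
  unfold excessDensity
  positivity

theorem circE_eq_add_integral_excessDensity (hu : ContDiff ℝ 1 u) :
    circE κ u = (∫ t in (-π)..π, ‖inPlane (deriv u t)‖ ^ 2) +
      (∫ t in (-π)..π, κ ^ 2 * u t 2 ^ 2) + ∫ t in (-π)..π, excessDensity κ u t := by
  have hu_cont : Continuous u := hu.continuous
  have hderiv_cont : Continuous (deriv u) := hu.continuous_deriv_one
  have hexcess_cont : Continuous (excessDensity κ u) := continuous_excessDensity hu
  have hinPlane_cont := continuous_inPlane_comp hderiv_cont
  simp only [circE, sq3_eq_norm_inPlane_sq_add (deriv u _), sq3_crossProduct_nvec,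
    tangential]
  rw [← intervalIntegral.integral_const_mul, ← intervalIntegral.integral_add,
    ← intervalIntegral.integral_add, ← intervalIntegral.integral_add]
  · congr 1 with t
    rw [excessDensity, tangential]
    ring
  all_goals exact Continuous.intervalIntegrable (by fun_prop) _ _

theorem integral_inPlane_eq_zero (hu : AdmWAS u) : ∫ t in (-π)..π, inPlane (u t) = 0 := by
  obtain ⟨hC, -, -, h0, h1⟩ := hu
  have hu_cont : Continuous u := hC.continuous
  unfold inPlane
  rw [intervalIntegral.integral_add, intervalIntegral.integral_mul_const,
    intervalIntegral.integral_ofReal, intervalIntegral.integral_ofReal, h0, h1]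
  · simp
  all_goals exact Continuous.intervalIntegrable (by fun_prop) _ _

theorem integral_norm_inPlane_sq_le (hu : AdmWAS u) :
    ∫ t in (-π)..π, ‖inPlane (u t)‖ ^ 2 ≤ ∫ t in (-π)..π, ‖inPlane (deriv u t)‖ ^ 2 := by
  have hmean := integral_inPlane_eq_zero hu
  obtain ⟨hC, hper, -⟩ := hu
  have hderiv (t : ℝ) : HasDerivAt u (deriv u t) t := (hC.differentiable_one t).hasDerivAt
  have hderiv_memLp : MemLp (fun t ↦ inPlane (deriv u t)) 2 (volume.restrict (Ioc (-π) π)) :=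
    memLp_restrict_of_continuousOn_of_subset
      (continuous_inPlane_comp hC.continuous_deriv_one).continuousOn isCompact_Icc
      measurableSet_Ioc Ioc_subset_Icc_self 2
  have hends : u (-π) = u π := by
    rw [← hper, show -π + 2 * π = π by ring]
  have hscale : (π - -π) / (2 * π) = 1 := by
    field_simp
    ring
  simpa only [hscale, one_pow, one_mul] using
    wirtinger_inequality (neg_lt_self pi_pos) (continuous_inPlane_comp hC.continuous).continuousOn
      (fun t _ ↦ hasDerivAt_inPlane_comp (hderiv t)) hderiv_memLp (congrArg inPlane hends) hmean

theorem two_pi_mul_min_le_integral (hu : Continuous u) (hnorm : ∀ t, sq3 (u t) = 1) (c : ℝ) :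
    2 * π * min 1 c ≤
      (∫ t in (-π)..π, ‖inPlane (u t)‖ ^ 2) + ∫ t in (-π)..π, c * u t 2 ^ 2 := by
  have hinPlane_cont := continuous_inPlane_comp hu
  have hinPlane_int : IntervalIntegrable (fun t ↦ ‖inPlane (u t)‖ ^ 2) volume (-π) π :=
    Continuous.intervalIntegrable (by fun_prop) _ _
  have hvert_int : IntervalIntegrable (fun t ↦ c * u t 2 ^ 2) volume (-π) π :=
    Continuous.intervalIntegrable (by fun_prop) _ _
  calc 2 * π * min 1 c = ∫ _ in (-π)..π, min 1 c := by
        rw [intervalIntegral.integral_const, smul_eq_mul]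
        ring
    _ ≤ ∫ t in (-π)..π, (‖inPlane (u t)‖ ^ 2 + c * u t 2 ^ 2) :=
        intervalIntegral.integral_mono (neg_le_self pi_pos.le) intervalIntegrable_const
          (hinPlane_int.add hvert_int)
          fun t ↦ min_le_norm_inPlane_sq_add_of_sq3_eq_one (hnorm t) c
    _ = _ := intervalIntegral.integral_add hinPlane_int hvert_int

theorem two_pi_mul_min_add_integral_excessDensity_le_circE (hu : AdmWAS u) :
    2 * π * min 1 (κ ^ 2) + ∫ t in (-π)..π, excessDensity κ u t ≤ circE κ u := by
  rw [circE_eq_add_integral_excessDensity hu.1]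
  linarith [integral_norm_inPlane_sq_le hu,
    two_pi_mul_min_le_integral hu.1.continuous hu.2.2.1 (κ ^ 2)]

theorem two_pi_mul_min_le_circE (hu : AdmWAS u) : 2 * π * min 1 (κ ^ 2) ≤ circE κ u :=
  (le_add_of_nonneg_right (intervalIntegral.integral_nonneg (neg_le_self pi_pos.le)
    fun t _ ↦ excessDensity_nonneg t)).trans
      (two_pi_mul_min_add_integral_excessDensity_le_circE hu)

end LowerBound

section Rigidity

variable {κ : ℝ} {u : ℝ → Fin 3 → ℝ}

theorem periodic_excessDensity (hu : Function.Periodic u (2 * π)) :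
    Function.Periodic (excessDensity κ u) (2 * π) := fun t ↦ by
  simp only [excessDensity, tangential, hu t, periodic_deriv hu t, sin_add_two_pi, cos_add_two_pi]

theorem excessDensity_eq_zero_of_circE_le (hu : AdmWAS u)
    (hE : circE κ u ≤ 2 * π * min 1 (κ ^ 2)) (t : ℝ) : excessDensity κ u t = 0 := by
  have hint_nonneg : 0 ≤ ∫ t in (-π)..π, excessDensity κ u t :=
    intervalIntegral.integral_nonneg (neg_le_self pi_pos.le) fun t _ ↦ excessDensity_nonneg t
  have hint : ∫ t in (-π)..π, excessDensity κ u t = 0 := by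
    linarith [two_pi_mul_min_add_integral_excessDensity_le_circE (κ := κ) hu]
  refine eq_zero_of_periodic_of_intervalIntegral_eq_zero two_pi_pos
    (continuous_excessDensity hu.1) (periodic_excessDensity hu.2.1) excessDensity_nonneg
    (a := -π) ?_ t
  rwa [show -π + 2 * π = π by ring]

theorem excessDensity_eq_zero_iff (hκ : κ ≠ 0) {t : ℝ} :
    excessDensity κ u t = 0 ↔ deriv u t 2 = 0 ∧ tangential (u t) t = 0 := by
  rw [excessDensity, add_eq_zero_iff_of_nonneg (by positivity) (by positivity)]
  simp [hκ]

theorem exists_eq_uax_of_tangential_eq_zero (hu : Continuous u) (hnorm : ∀ t, sq3 (u t) = 1)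
    (htan : ∀ t, tangential (u t) t = 0) (hvert : ∀ t, u t 2 = u 0 2) :
    ∃ θ ∈ Icc (-π) π, u = uax θ := by
  have hradial_sq (t : ℝ) : radial (u t) t ^ 2 = 1 - u 0 2 ^ 2 := by
    have h := hnorm t
    rw [sq3_eq_norm_inPlane_sq_add, norm_inPlane_sq_eq_radial_sq_add_tangential_sq _ t, htan,
      hvert] at h
    linear_combination h
  have hradial_cont : Continuous fun t ↦ radial (u t) t := by
    unfold radial
    fun_prop
  have hradial (t : ℝ) : radial (u t) t = radial (u 0) 0 :=
    eq_of_forall_sq_eq hradial_cont hradial_sq t 0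
  obtain ⟨θ, hθ, hcos, hsin⟩ :=
    exists_cos_eq_sin_eq (show u 0 2 ^ 2 + radial (u 0) 0 ^ 2 = 1 by rw [hradial_sq]; ring)
  refine ⟨θ, hθ, funext fun t ↦ ?_⟩
  rw [eq_radial_of_tangential_eq_zero (htan t), hradial, hvert, uax, hcos, hsin]

theorem exists_eq_uax_of_circE_le (hκ : κ ≠ 0) (hu : AdmWAS u)
    (hE : circE κ u ≤ 2 * π * min 1 (κ ^ 2)) : ∃ θ ∈ Icc (-π) π, u = uax θ := by
  have hzero (t : ℝ) : deriv u t 2 = 0 ∧ tangential (u t) t = 0 :=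
    (excessDensity_eq_zero_iff hκ).1 (excessDensity_eq_zero_of_circE_le hu hE t)
  have hvert_deriv (t : ℝ) : HasDerivAt (fun s ↦ u s 2) 0 t :=
    (hzero t).1 ▸ hasDerivAt_pi.1 (hu.1.differentiable_one t).hasDerivAt 2
  exact exists_eq_uax_of_tangential_eq_zero hu.1.continuous hu.2.2.1 (fun t ↦ (hzero t).2) fun t ↦
    is_const_of_deriv_eq_zero (fun s ↦ (hvert_deriv s).differentiableAt)
      (fun s ↦ (hvert_deriv s).deriv) t 0

end Rigidity

section Minimizers

variable {κ : ℝ} {u : ℝ → Fin 3 → ℝ}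

theorem exists_circE_uax_eq (κ : ℝ) : ∃ θ, circE κ (uax θ) = 2 * π * min 1 (κ ^ 2) := by
  rcases min_choice 1 (κ ^ 2) with h | h
  · exact ⟨π / 2, by simp [circE_uax, h]⟩
  · exact ⟨0, by simp [circE_uax, h]⟩

theorem isMinimizerWAS_iff_circE_eq :
    IsMinimizerWAS κ u ↔ AdmWAS u ∧ circE κ u = 2 * π * min 1 (κ ^ 2) := by
  refine and_congr_right fun hu ↦ ⟨fun hmin ↦ ?_, fun hE v hv ↦ hE ▸ two_pi_mul_min_le_circE hv⟩
  obtain ⟨θ, hθ⟩ := exists_circE_uax_eq κ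
  exact (hθ ▸ hmin _ (admWAS_uax θ)).antisymm (two_pi_mul_min_le_circE hu)

theorem isMinimizerWAS_iff_exists_uax (hκ : κ ≠ 0) :
    IsMinimizerWAS κ u ↔ ∃ θ ∈ Icc (-π) π,
      u = uax θ ∧ sin θ ^ 2 + κ ^ 2 * cos θ ^ 2 = min 1 (κ ^ 2) := by
  have hcircE_iff (θ : ℝ) : circE κ (uax θ) = 2 * π * min 1 (κ ^ 2) ↔
      sin θ ^ 2 + κ ^ 2 * cos θ ^ 2 = min 1 (κ ^ 2) := by
    rw [circE_uax, mul_right_inj' two_pi_pos.ne']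
  rw [isMinimizerWAS_iff_circE_eq]
  constructor
  · rintro ⟨hu, hE⟩
    obtain ⟨θ, hθ, rfl⟩ := exists_eq_uax_of_circE_le hκ hu hE.le
    exact ⟨θ, hθ, rfl, (hcircE_iff θ).1 hE⟩
  · rintro ⟨θ, -, rfl, hE⟩
    exact ⟨admWAS_uax θ, (hcircE_iff θ).2 hE⟩

theorem sin_sq_add_mul_cos_sq_eq_min_iff_of_lt_one {c : ℝ} (hc : c < 1) (θ : ℝ) :
    sin θ ^ 2 + c * cos θ ^ 2 = min 1 c ↔ sin θ = 0 := by
  rw [min_eq_right hc.le, cos_sq', ← sub_eq_zero,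
    show sin θ ^ 2 + c * (1 - sin θ ^ 2) - c = (1 - c) * sin θ ^ 2 by ring]
  simp [sub_eq_zero, hc.ne']

theorem sin_sq_add_mul_cos_sq_eq_min_iff_of_one_lt {c : ℝ} (hc : 1 < c) (θ : ℝ) :
    sin θ ^ 2 + c * cos θ ^ 2 = min 1 c ↔ cos θ = 0 := by
  rw [min_eq_left hc.le, sin_sq, ← sub_eq_zero,
    show 1 - cos θ ^ 2 + c * cos θ ^ 2 - 1 = (c - 1) * cos θ ^ 2 by ring]
  simp [sub_eq_zero, hc.ne']

theorem isMinimizerWAS_iff_of_sq_lt_one (hκ : κ ≠ 0) (hlt : κ ^ 2 < 1) :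
    IsMinimizerWAS κ u ↔ (u = fun _ ↦ ![0, 0, 1]) ∨ u = fun _ ↦ ![0, 0, -1] := by
  simp only [isMinimizerWAS_iff_exists_uax hκ, sin_sq_add_mul_cos_sq_eq_min_iff_of_lt_one hlt]
  constructor
  · rintro ⟨θ, -, rfl, hsin⟩
    refine (sin_eq_zero_iff_cos_eq.1 hsin).imp (fun hcos ↦ ?_) fun hcos ↦ ?_ <;>
      simp [funext_iff, uax, hsin, hcos]
  · rintro (rfl | rfl)
    · exact ⟨0, ⟨neg_nonpos.2 pi_pos.le, pi_pos.le⟩, uax_zero.symm, sin_zero⟩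
    · exact ⟨π, ⟨neg_le_self pi_pos.le, le_rfl⟩, uax_pi.symm, sin_pi⟩

theorem isMinimizerWAS_iff_of_one_lt_sq (hlt : 1 < κ ^ 2) :
    IsMinimizerWAS κ u ↔ u = nvec ∨ u = fun t ↦ -nvec t := by
  have hκ : κ ≠ 0 := sq_pos_iff.1 (one_pos.trans hlt)
  simp only [isMinimizerWAS_iff_exists_uax hκ, sin_sq_add_mul_cos_sq_eq_min_iff_of_one_lt hlt]
  constructor
  · rintro ⟨θ, -, rfl, hcos⟩
    refine (cos_eq_zero_iff_sin_eq.1 hcos).imp (fun hsin ↦ ?_) fun hsin ↦ ?_ <;>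
      simp [funext_iff, uax, nvec, hcos, hsin]
  · rintro (rfl | rfl)
    · exact ⟨π / 2, ⟨by linarith [pi_pos], by linarith [pi_pos]⟩, uax_pi_div_two.symm, by simp⟩
    · exact ⟨-(π / 2), ⟨by linarith [pi_pos], by linarith [pi_pos]⟩, uax_neg_pi_div_two.symm,
        by simp⟩

theorem isMinimizerWAS_iff_of_sq_eq_one (heq : κ ^ 2 = 1) :
    IsMinimizerWAS κ u ↔ ∃ θ ∈ Icc (-π) π, u = uax θ := by
  have hκ : κ ≠ 0 := sq_pos_iff.1 (heq ▸ one_pos)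
  simp [isMinimizerWAS_iff_exists_uax hκ, heq]

end Minimizers

/-- **Minimizers of the reduced energy in the weakly axially symmetric class**:
for `0 < κ² < 1` the only minimizers are `±e₃` (minimal value `2πκ²`); for
`κ² > 1` the only minimizers are `±n` (minimal value `2π`); for `κ² = 1` the
minimizers are exactly the maps `u_θ`, `θ ∈ [−π,π]` (common value `2π`). -/
theorem reduced_energy_minimizers_WAS (κ : ℝ) (hκ : 0 < κ ^ 2) :
    (κ ^ 2 < 1 → ∀ u : ℝ → Fin 3 → ℝ,
      (IsMinimizerWAS κ u ↔
        ((∀ t : ℝ, u t = ![0, 0, 1]) ∨ (∀ t : ℝ, u t = ![0, 0, -1]))) ∧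
      (IsMinimizerWAS κ u → circE κ u = 2 * π * κ ^ 2)) ∧
    (1 < κ ^ 2 → ∀ u : ℝ → Fin 3 → ℝ,
      (IsMinimizerWAS κ u ↔
        ((∀ t : ℝ, u t = nvec t) ∨ (∀ t : ℝ, u t = -nvec t))) ∧
      (IsMinimizerWAS κ u → circE κ u = 2 * π)) ∧
    (κ ^ 2 = 1 → ∀ u : ℝ → Fin 3 → ℝ,
      (IsMinimizerWAS κ u ↔
        ∃ θ ∈ Icc (-π) π, ∀ t : ℝ, u t = uax θ t) ∧
      (IsMinimizerWAS κ u → circE κ u = 2 * π)) := by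
  have hκ_ne : κ ≠ 0 := sq_pos_iff.1 hκ
  have hvalue {u : ℝ → Fin 3 → ℝ} (hu : IsMinimizerWAS κ u) :
      circE κ u = 2 * π * min 1 (κ ^ 2) := (isMinimizerWAS_iff_circE_eq.1 hu).2
  refine ⟨fun hlt u ↦ ⟨?_, fun hu ↦ ?_⟩, fun hlt u ↦ ⟨?_, fun hu ↦ ?_⟩,
    fun heq u ↦ ⟨?_, fun hu ↦ ?_⟩⟩
  · simpa only [funext_iff (f := u)] using isMinimizerWAS_iff_of_sq_lt_one (u := u) hκ_ne hlt
  · rw [hvalue hu, min_eq_right hlt.le]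
  · simpa only [funext_iff (f := u)] using isMinimizerWAS_iff_of_one_lt_sq (u := u) hlt
  · rw [hvalue hu, min_eq_left hlt.le, mul_one]
  · simpa only [funext_iff (f := u)] using isMinimizerWAS_iff_of_sq_eq_one (u := u) heq
  · rw [hvalue hu, heq, min_self, mul_one]
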